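/- arXiv:1207.4331 — 3 statements merged into one kernel-verified Lean document; each statement's English description precedes it below -/
import Mathlib

section
/- Let T, (r_n), (s_n) be as in the context, let B : \mathbb{C}[x] \times \mathbb{C}[x] \to \mathbb{C} be a bilinear form, and let (\psi_i)_{i\ge 0} be polynomials with deg \psi_i = i. Set \mu_j^i = B(r_j, \psi_i). Define p_0 = 1 and, for k \ge 1, let p_k(x) be the determinant of the (k+1)\times(k+1) matrix whose (i,j)-entry is \mu_{k+1-i}^{j-1} for 1 \le j \le k and whose (i, k+1)-entry is r_{k+1-i}(x). Define q_n^i(x) = \sum_{j=0}^n \mu_j^i s_{n-j}(x), and for k \ge 0 let \Omega_k = \det( \mu_{k+1-i}^{j-1} )_{i,j=1}^{k+1}. Then for all integers n, m \ge 1 and all x: \det( T^{i-1}(p_{m+j-1})(x) )_{i,j=1}^n = (-1)^{\binom{n}{2}} \left( \prod_{j=0}^{n-2} \Omega_{m+j} \right) \cdot \det( q^{j-1}_{n+m-i}(x) )_{i,j=1}^m. -/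
open Polynomial

/-!
Encode a sequence by its generating function and let `φ_k(v)` be the determinant with columns
`f 0, …, f (k - 1), v`, where `f i = ∑ⱼ μ_jⁱ tʲ`, so that `p_k = φ_k(r)` for `r(t) = ∑ⱼ r_j tʲ`.
Applying `T` to the coefficients of `r(t)` multiplies it by `t`, hence `Tⁱ p_k = φ_k(tⁱ r)`.
Multiplying all columns by `s(t) = 1 / r(t)` is a unitriangular row operation; it replaces `f i` by
`∑ₙ q_nⁱ tⁿ`, turns `tⁱ r` into `tⁱ`, and leaves every `Ω_k` unchanged.

The remaining identity concerns the minor `(φ_{m+j}(tⁱ))` for arbitrary columns `f`. Since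
`φ_k(f l) = 0` for `l < k` and `φ_k(f k) = Ω_k`, multiplying the square coefficient matrix of size
`m + n + 1` by a block matrix built from the functionals `φ_m, …, φ_{m+n}` makes it block
triangular, with determinant `Ω_m ⋯ Ω_{m+n}` times the wanted `m × m` minor. It remains to cancel
`Ω_{m+n}`, which is legitimate after a perturbation making it a monic polynomial.
-/

open scoped PowerSeries

section CommRing

variable {R : Type*} [CommRing R]

theorem eval_det_eq_det_map_eval {ι : Type*} [Fintype ι] [DecidableEq ι] (x : R)
    (N : Matrix ι ι R[X]) : N.det.eval x = (N.map (Polynomial.eval x)).det :=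
  (Polynomial.evalRingHom x).map_det N

/-- The matrix of the top `m` coefficients, from degree `N` downwards, of the columns
`f 0, …, f (m - 1)`. For `m = N + 1` it is the moment matrix whose determinant is `Ω_N`, the
columns being the generating functions `∑ⱼ μ_jⁱ tʲ`. -/
noncomputable def coeffMatrix (f : ℕ → R⟦X⟧) (N m : ℕ) : Matrix (Fin m) (Fin m) R :=
  Matrix.of fun i j => PowerSeries.coeff (N - i) (f j)

/-- The determinant with columns `f 0, …, f (k - 1), v`, coefficients being listed from degree `k`
downwards, as a linear functional of `v`. The polynomial `p_k` is its value at `∑ⱼ r_j tʲ`.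
Cramer's rule provides linearity. -/
noncomputable def borderedDet (f : ℕ → R⟦X⟧) (k : ℕ) : R⟦X⟧ →ₗ[R] R :=
  LinearMap.proj (Fin.last k) ∘ₗ (coeffMatrix f k (k + 1)).cramer ∘ₗ
    LinearMap.pi fun i => PowerSeries.coeff (k - i)

/-- The upper triangular Toeplitz matrix of multiplication by `g` on coefficients of degree at most
`k`, listed from degree `k` downwards. -/
noncomputable def toeplitzMatrix (g : R⟦X⟧) (k : ℕ) : Matrix (Fin (k + 1)) (Fin (k + 1)) R :=
  Matrix.of fun i j => if i ≤ j then PowerSeries.coeff (j - i : ℕ) g else 0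

theorem borderedDet_eq_cramer (f : ℕ → R⟦X⟧) (k : ℕ) (v : R⟦X⟧) :
    borderedDet f k v =
      (coeffMatrix f k (k + 1)).cramer (fun i => PowerSeries.coeff (k - i) v) (Fin.last k) :=
  rfl

theorem borderedDet_eq_det_updateCol (f : ℕ → R⟦X⟧) (k : ℕ) (v : R⟦X⟧) :
    borderedDet f k v = ((coeffMatrix f k (k + 1)).updateCol (Fin.last k)
      fun i => PowerSeries.coeff (k - i) v).det := by
  rw [borderedDet_eq_cramer, Matrix.cramer_apply]

theorem borderedDet_eq_det_of_ite (f : ℕ → R⟦X⟧) (k : ℕ) (v : R⟦X⟧) :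
    borderedDet f k v = (Matrix.of fun i j : Fin (k + 1) =>
      if (j : ℕ) < k then PowerSeries.coeff (k - i) (f j)
      else PowerSeries.coeff (k - i) v).det := by
  rw [borderedDet_eq_det_updateCol]
  congr 1
  ext i j
  induction j using Fin.lastCases <;> simp [coeffMatrix]

theorem borderedDet_congr (f : ℕ → R⟦X⟧) {k : ℕ} {v w : R⟦X⟧}
    (h : ∀ a ≤ k, PowerSeries.coeff a v = PowerSeries.coeff a w) :
    borderedDet f k v = borderedDet f k w := by
  simp only [borderedDet_eq_cramer, h _ (Nat.sub_le _ _)]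

theorem borderedDet_self (f : ℕ → R⟦X⟧) (k : ℕ) :
    borderedDet f k (f k) = (coeffMatrix f k (k + 1)).det := by
  have cramer_col := (coeffMatrix f k (k + 1)).cramer_row_self
    (fun i => PowerSeries.coeff (k - i) (f k)) (Fin.last k) fun _ => rfl
  rw [borderedDet_eq_cramer, cramer_col, Pi.single_eq_same]

theorem borderedDet_of_lt (f : ℕ → R⟦X⟧) {k l : ℕ} (h : l < k) : borderedDet f k (f l) = 0 := by
  have cramer_col := (coeffMatrix f k (k + 1)).cramer_row_self
    (fun i => PowerSeries.coeff (k - i) (f l)) (Fin.castSucc ⟨l, h⟩) fun _ => rfl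
  rw [borderedDet_eq_cramer, cramer_col, Pi.single_eq_of_ne (Fin.castSucc_lt_last _).ne']

theorem sum_borderedDet_X_pow_mul_coeff (f : ℕ → R⟦X⟧) {k N : ℕ} (h : k ≤ N) (v : R⟦X⟧) :
    ∑ i : Fin (N + 1), borderedDet f k (PowerSeries.X ^ (N - i : ℕ)) * PowerSeries.coeff (N - i) v =
      borderedDet f k v := by
  calc
    _ = borderedDet f k (∑ i ∈ Finset.range (N + 1),
          PowerSeries.coeff i v • (PowerSeries.X ^ i : R⟦X⟧)) := by
      rw [Fin.sum_univ_eq_sum_range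
        (fun i => borderedDet f k (PowerSeries.X ^ (N - i)) * PowerSeries.coeff (N - i) v),
        ← Finset.sum_range_reflect, map_sum]
      refine Finset.sum_congr rfl fun i hi => ?_
      rw [show N - (N + 1 - 1 - i) = i by have := Finset.mem_range.1 hi; omega, map_smul,
        smul_eq_mul, mul_comm]
    _ = borderedDet f k v := borderedDet_congr f fun a ha => by
      simp [PowerSeries.coeff_X_pow, show a < N + 1 by omega]

theorem coeffMatrix_map {S : Type*} [CommRing S] (φ : R →+* S) (f : ℕ → R⟦X⟧) (N m : ℕ) :
    coeffMatrix (fun j => PowerSeries.map φ (f j)) N m = φ.mapMatrix (coeffMatrix f N m) := by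
  ext i j
  simp [coeffMatrix]

theorem borderedDet_map {S : Type*} [CommRing S] (φ : R →+* S) (f : ℕ → R⟦X⟧) (k : ℕ)
    (v : R⟦X⟧) :
    borderedDet (fun j => PowerSeries.map φ (f j)) k (PowerSeries.map φ v) =
      φ (borderedDet f k v) := by
  rw [borderedDet_eq_det_updateCol, borderedDet_eq_det_updateCol, coeffMatrix_map, RingHom.map_det,
    RingHom.mapMatrix_apply, RingHom.mapMatrix_apply, Matrix.map_updateCol]
  simp [Function.comp_def]

theorem borderedDet_map_algebraMap {A : Type*} [CommRing A] [Algebra R A] (f : ℕ → R⟦X⟧) (k : ℕ)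
    (v : A⟦X⟧) :
    borderedDet (fun j => PowerSeries.map (algebraMap R A) (f j)) k v =
      ∑ i : Fin (k + 1), (coeffMatrix f k (k + 1)).adjugate (Fin.last k) i •
        PowerSeries.coeff (k - i) v := by
  rw [borderedDet_eq_cramer, Matrix.cramer_eq_adjugate_mulVec, coeffMatrix_map,
    ← RingHom.map_adjugate]
  simp [Matrix.mulVec, dotProduct, Algebra.smul_def]

theorem map_borderedDet_of_map_coeff {A A' : Type*} [CommRing A] [Algebra R A] [CommRing A']
    [Algebra R A'] (L : A →ₗ[R] A') (f : ℕ → R⟦X⟧) (k : ℕ) {v : A⟦X⟧} {w : A'⟦X⟧}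
    (h : ∀ a, L (PowerSeries.coeff a v) = PowerSeries.coeff a w) :
    L (borderedDet (fun j => PowerSeries.map (algebraMap R A) (f j)) k v) =
      borderedDet (fun j => PowerSeries.map (algebraMap R A') (f j)) k w := by
  simp only [borderedDet_map_algebraMap, map_sum, map_smul, h]

theorem det_toeplitzMatrix (g : R⟦X⟧) (k : ℕ) :
    (toeplitzMatrix g k).det = PowerSeries.constantCoeff g ^ (k + 1) := by
  have upper : (toeplitzMatrix g k).IsUpperTriangular := fun _ _ hij => if_neg (not_le_of_gt hij)
  rw [Matrix.det_of_isUpperTriangular upper]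
  simp [toeplitzMatrix]

theorem toeplitzMatrix_mulVec_coeff (g v : R⟦X⟧) (k : ℕ) :
    (toeplitzMatrix g k).mulVec (fun i => PowerSeries.coeff (k - i) v) =
      fun i : Fin (k + 1) => PowerSeries.coeff (k - i) (g * v) := by
  ext i
  have split_range : Finset.range (k + 1) = Finset.range (i + (k - i + 1)) := by
    congr 1
    omega
  have below_diagonal : ∑ j ∈ Finset.range i, (if (i : ℕ) ≤ j then PowerSeries.coeff (j - i) g
      else 0) * PowerSeries.coeff (k - j) v = 0 :=
    Finset.sum_eq_zero fun j hj => by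
      rw [if_neg (not_le_of_gt (Finset.mem_range.1 hj)), zero_mul]
  simp only [Matrix.mulVec, dotProduct, toeplitzMatrix, Matrix.of_apply, Fin.le_def]
  rw [Fin.sum_univ_eq_sum_range (fun j => (if (i : ℕ) ≤ j then PowerSeries.coeff (j - i) g
      else 0) * PowerSeries.coeff (k - j) v), PowerSeries.coeff_mul,
    Finset.Nat.sum_antidiagonal_eq_sum_range_succ_mk, split_range,
    Finset.sum_range_add, below_diagonal, zero_add]
  simp [Nat.sub_sub]

theorem coeffMatrix_mul (g : R⟦X⟧) (f : ℕ → R⟦X⟧) (k : ℕ) :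
    coeffMatrix (fun j => g * f j) k (k + 1) = toeplitzMatrix g k * coeffMatrix f k (k + 1) := by
  ext i j
  exact (congrFun (toeplitzMatrix_mulVec_coeff g (f j) k) i).symm

theorem det_coeffMatrix_mul (g : R⟦X⟧) (f : ℕ → R⟦X⟧) (k : ℕ) :
    (coeffMatrix (fun j => g * f j) k (k + 1)).det =
      PowerSeries.constantCoeff g ^ (k + 1) * (coeffMatrix f k (k + 1)).det := by
  rw [coeffMatrix_mul, Matrix.det_mul, det_toeplitzMatrix]

theorem borderedDet_mul (g : R⟦X⟧) (f : ℕ → R⟦X⟧) (k : ℕ) (v : R⟦X⟧) :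
    borderedDet (fun j => g * f j) k (g * v) =
      PowerSeries.constantCoeff g ^ (k + 1) * borderedDet f k v := by
  rw [borderedDet_eq_det_updateCol, borderedDet_eq_det_updateCol, coeffMatrix_mul,
    ← toeplitzMatrix_mulVec_coeff, ← Matrix.mul_updateCol, Matrix.det_mul, det_toeplitzMatrix]

theorem det_borderedDet_columns (f : ℕ → R⟦X⟧) (m n : ℕ) :
    (Matrix.of fun i j : Fin n => borderedDet f (m + i) (f (m + j))).det =
      ∏ j ∈ Finset.range n, (coeffMatrix f (m + j) (m + j + 1)).det := by
  have upper : (Matrix.of fun i j : Fin n => borderedDet f (m + i) (f (m + j))).IsUpperTriangular :=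
    fun i j (hij : j < i) => borderedDet_of_lt f (Nat.add_lt_add_left hij m)
  rw [Matrix.det_of_isUpperTriangular upper]
  simp only [Matrix.of_apply, borderedDet_self]
  exact Fin.prod_univ_eq_prod_range (fun j => (coeffMatrix f (m + j) (m + j + 1)).det) n

theorem det_borderedDet_X_pow_rev_mul (f : ℕ → R⟦X⟧) (n m : ℕ) :
    (Matrix.of fun i j : Fin (n + 1) =>
        borderedDet f (m + i) (PowerSeries.X ^ (n - j : ℕ))).det *
      (coeffMatrix f (m + n) (m + n + 1)).det =
    (∏ j ∈ Finset.range (n + 1), (coeffMatrix f (m + j) (m + j + 1)).det) *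
      (coeffMatrix f (m + n) m).det := by
  let e : Fin m ⊕ Fin (n + 1) ≃ Fin (m + n + 1) := finSumFinEquiv
  let G : Matrix (Fin (n + 1)) (Fin m ⊕ Fin (n + 1)) R :=
    Matrix.of fun i c => borderedDet f (m + i) (PowerSeries.X ^ (m + n - e c : ℕ))
  let D := (coeffMatrix f (m + n) (m + n + 1)).submatrix e e
  have hG : G.toCols₂ = Matrix.of fun i j : Fin (n + 1) =>
      borderedDet f (m + i) (PowerSeries.X ^ (n - j : ℕ)) := by
    ext i j
    simp [G, e, Matrix.toCols₂, Nat.add_sub_add_left]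
  have hGD (i c) : (G * D) i c = borderedDet f (m + i) (f (e c)) := by
    rw [← sum_borderedDet_X_pow_mul_coeff f (show m + (i : ℕ) ≤ m + n by omega), ← e.sum_comp]
    rfl
  have hblock : Matrix.fromBlocks 1 0 G.toCols₁ G.toCols₂ * D =
      Matrix.fromBlocks (coeffMatrix f (m + n) m) D.toBlocks₁₂ 0
        (Matrix.of fun i j : Fin (n + 1) => borderedDet f (m + i) (f (m + j))) := by
    rw [← Matrix.fromRows_fromCols_eq_fromBlocks, Matrix.fromCols_toCols, Matrix.fromRows_mul]
    ext (i | i) (j | j)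
    · simp [D, e, coeffMatrix, Matrix.mul_apply, Matrix.one_apply]
    · simp [Matrix.toBlocks₁₂, Matrix.mul_apply, Matrix.one_apply]
    · exact (hGD i _).trans (borderedDet_of_lt f (j.2.trans_le (Nat.le_add_right m i)))
    · exact hGD i _
  have hdet := congrArg Matrix.det hblock
  rwa [Matrix.det_mul, Matrix.det_fromBlocks_zero₁₂, Matrix.det_fromBlocks_zero₂₁, Matrix.det_one,
    one_mul, hG, Matrix.det_submatrix_equiv_self, det_borderedDet_columns,
    mul_comm (coeffMatrix f (m + n) m).det] at hdet

theorem sign_revPerm (n : ℕ) : Equiv.Perm.sign (Fin.revPerm : Equiv.Perm (Fin n)) =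
    (-1) ^ n.choose 2 := by
  have inversions (i : Fin n) :
      (∏ j ∈ Finset.Ioi i, if Fin.revPerm i < Fin.revPerm j then (1 : ℤˣ) else -1) =
        (-1) ^ (n - 1 - i : ℕ) := by
    calc
      _ = ∏ _j ∈ Finset.Ioi i, (-1 : ℤˣ) := Finset.prod_congr rfl fun j hj =>
        if_neg (not_lt_of_gt (Fin.rev_lt_rev.2 (Finset.mem_Ioi.1 hj)))
      _ = (-1) ^ (n - 1 - i : ℕ) := by rw [Finset.prod_const, Fin.card_Ioi]
  rw [Equiv.Perm.sign_eq_prod_prod_Ioi, Finset.prod_congr rfl fun i _ => inversions i,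
    Fin.prod_univ_eq_prod_range fun i => (-1 : ℤˣ) ^ (n - 1 - i),
    Finset.prod_range_reflect fun i => (-1 : ℤˣ) ^ i, Finset.prod_pow_eq_pow_sum,
    Finset.sum_range_id, Nat.choose_two_right]

theorem det_borderedDet_X_pow_rev (f : ℕ → R⟦X⟧) (n m : ℕ) :
    (Matrix.of fun i j : Fin (n + 1) =>
        borderedDet f (m + i) (PowerSeries.X ^ (n - j : ℕ))).det =
      (-1) ^ (n + 1).choose 2 * (Matrix.of fun i j : Fin (n + 1) =>
        borderedDet f (m + j) (PowerSeries.X ^ (i : ℕ))).det := by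
  have reverse := Matrix.det_permute Fin.revPerm (Matrix.of fun i j : Fin (n + 1) =>
    borderedDet f (m + j) (PowerSeries.X ^ (i : ℕ)))
  rw [sign_revPerm] at reverse
  push_cast at reverse
  rw [← reverse, ← Matrix.det_transpose]
  congr 1
  ext i j
  simp [Fin.val_rev]

theorem det_borderedDet_X_pow_of_isRegular (f : ℕ → R⟦X⟧) (n m : ℕ)
    (h : IsRegular (coeffMatrix f (m + n) (m + n + 1)).det) :
    (Matrix.of fun i j : Fin (n + 1) => borderedDet f (m + j) (PowerSeries.X ^ (i : ℕ))).det =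
      (-1) ^ (n + 1).choose 2 *
        (∏ j ∈ Finset.range n, (coeffMatrix f (m + j) (m + j + 1)).det) *
        (coeffMatrix f (m + n) m).det := by
  have product_eq := det_borderedDet_X_pow_rev_mul f n m
  rw [Finset.prod_range_succ, mul_right_comm] at product_eq
  have sign_sq : ((-1 : R) ^ (n + 1).choose 2) * (-1) ^ (n + 1).choose 2 = 1 := by
    rw [← mul_pow, neg_one_mul, neg_neg, one_pow]
  rw [mul_assoc, ← h.right product_eq, det_borderedDet_X_pow_rev, ← mul_assoc, sign_sq, one_mul]

/-- The perturbation of the columns `f` over `R[X]` that adds the scalar matrix `X` to their square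
coefficient matrix of top degree `N`, whose determinant thereby becomes monic, hence regular.
Setting `X = 0` recovers `f`. The columns beyond `f N`, where `N - j` is truncated, do not occur in
that matrix. -/
noncomputable def scalarShift (f : ℕ → R⟦X⟧) (N : ℕ) : ℕ → R[X]⟦X⟧ := fun j =>
  PowerSeries.map Polynomial.C (f j) + PowerSeries.monomial (N - j) Polynomial.X

theorem map_eval_zero_scalarShift (f : ℕ → R⟦X⟧) (N j : ℕ) :
    PowerSeries.map (Polynomial.evalRingHom 0) (scalarShift f N j) = f j := by
  ext a
  have eval_shift : Polynomial.eval 0 (if a = N - j then (Polynomial.X : R[X]) else 0) = 0 := by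
    split_ifs <;> simp
  simp [scalarShift, PowerSeries.coeff_monomial, eval_shift]

theorem isRegular_det_coeffMatrix_scalarShift (f : ℕ → R⟦X⟧) (N : ℕ) :
    IsRegular (coeffMatrix (scalarShift f N) N (N + 1)).det := by
  have shift : coeffMatrix (scalarShift f N) N (N + 1) =
      (Polynomial.X : R[X]) • (1 : Matrix (Fin (N + 1)) (Fin (N + 1)) R[X]) +
        (coeffMatrix f N (N + 1)).map Polynomial.C := by
    ext1 i j
    have index_eq_iff : N - (i : ℕ) = N - j ↔ i = j := by omega
    simp [coeffMatrix, scalarShift, PowerSeries.coeff_monomial, Matrix.one_apply, index_eq_iff,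
      add_comm]
  rw [shift]
  exact Polynomial.Monic.isRegular (Polynomial.leadingCoeff_det_X_one_add_C _)

theorem det_borderedDet_X_pow (f : ℕ → R⟦X⟧) (n m : ℕ) :
    (Matrix.of fun i j : Fin (n + 1) => borderedDet f (m + j) (PowerSeries.X ^ (i : ℕ))).det =
      (-1) ^ (n + 1).choose 2 *
        (∏ j ∈ Finset.range n, (coeffMatrix f (m + j) (m + j + 1)).det) *
        (coeffMatrix f (m + n) m).det := by
  let φ : R[X] →+* R := Polynomial.evalRingHom 0
  let g := scalarShift f (m + n)
  have map_g : (fun j => PowerSeries.map φ (g j)) = f :=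
    funext (map_eval_zero_scalarShift f (m + n))
  have det_map (N k : ℕ) : φ (coeffMatrix g N k).det = (coeffMatrix f N k).det := by
    rw [RingHom.map_det, ← coeffMatrix_map, map_g]
  have bordered_map (k i : ℕ) :
      φ (borderedDet g k (PowerSeries.X ^ i)) = borderedDet f k (PowerSeries.X ^ i) := by
    rw [← borderedDet_map, map_g, map_pow, PowerSeries.map_X]
  have specialized := congrArg φ (det_borderedDet_X_pow_of_isRegular g n m
    (isRegular_det_coeffMatrix_scalarShift f (m + n)))
  simpa [RingHom.map_det, RingHom.mapMatrix_apply, Matrix.map, bordered_map, det_map]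
    using specialized

end CommRing

section Algebra

variable {R A : Type*} [CommRing R] [CommRing A] [Algebra R A]

theorem pow_apply_eq_coeff_X_pow_mul (T : Module.End R A) (r : ℕ → A) (hr0 : T (r 0) = 0)
    (hr : ∀ n, T (r (n + 1)) = r n) (i a : ℕ) :
    (T ^ i) (r a) = PowerSeries.coeff a (PowerSeries.X ^ i * PowerSeries.mk r) := by
  induction i generalizing a with
  | zero => simp
  | succ i ih =>
    rw [pow_succ, Module.End.mul_apply, pow_succ', mul_assoc]
    cases a with
    | zero => simp [hr0]
    | succ a => rw [hr, ih, PowerSeries.coeff_succ_X_mul]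

theorem pow_apply_borderedDet_mk (T : Module.End R A) (r : ℕ → A) (hr0 : T (r 0) = 0)
    (hr : ∀ n, T (r (n + 1)) = r n) {σ : A⟦X⟧} (hσ : σ * PowerSeries.mk r = 1)
    (hσ0 : PowerSeries.constantCoeff σ = 1) (f : ℕ → R⟦X⟧) (i k : ℕ) :
    (T ^ i) (borderedDet (fun l => PowerSeries.map (algebraMap R A) (f l)) k (PowerSeries.mk r)) =
      borderedDet (fun l => σ * PowerSeries.map (algebraMap R A) (f l)) k (PowerSeries.X ^ i) := by
  have X_pow_eq : (PowerSeries.X ^ i : A⟦X⟧) = σ * (PowerSeries.X ^ i * PowerSeries.mk r) := by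
    rw [mul_left_comm, hσ, mul_one]
  rw [map_borderedDet_of_map_coeff (T ^ i) f k (w := PowerSeries.X ^ i * PowerSeries.mk r)
    fun a => by rw [PowerSeries.coeff_mk, pow_apply_eq_coeff_X_pow_mul T r hr0 hr]]
  nth_rw 2 [X_pow_eq]
  rw [borderedDet_mul, hσ0, one_pow, one_mul]

theorem mk_mul_mk_eq_one {S : Type*} [Semiring S] (r s : ℕ → S) (h0 : s 0 * r 0 = 1)
    (h : ∀ n, 1 ≤ n → ∑ j ∈ Finset.range (n + 1), s j * r (n - j) = 0) :
    PowerSeries.mk s * PowerSeries.mk r = 1 := by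
  ext n
  rw [PowerSeries.coeff_mul, Finset.Nat.sum_antidiagonal_eq_sum_range_succ_mk]
  cases n with
  | zero => simpa using h0
  | succ n => simpa [PowerSeries.coeff_one] using h (n + 1) n.succ_pos

theorem wronskian_type_det_bilinear_general (T : Module.End R A) (hT1 : T 1 = 0)
    (r s : ℕ → A) (hr0 : r 0 = 1) (hrT : ∀ n : ℕ, 1 ≤ n → T (r n) = r (n - 1)) (hs0 : s 0 = 1)
    (hs : ∀ n : ℕ, 1 ≤ n → ∑ j ∈ Finset.range (n + 1), s j * r (n - j) = 0)
    (M : ℕ → ℕ → R) (p : ℕ → A) (hp0 : p 0 = 1)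
    (hp : ∀ k : ℕ, 1 ≤ k → p k = Matrix.det (Matrix.of fun i j : Fin (k + 1) =>
      if (j : ℕ) < k then algebraMap R A (M (k - (i : ℕ)) (j : ℕ)) else r (k - (i : ℕ))))
    (q : ℕ → ℕ → A)
    (hq : ∀ n i : ℕ, q n i = ∑ j ∈ Finset.range (n + 1), algebraMap R A (M j i) * s (n - j))
    (Ω : ℕ → R)
    (hΩ : ∀ k : ℕ, Ω k = Matrix.det (Matrix.of fun i j : Fin (k + 1) => M (k - (i : ℕ)) (j : ℕ)))
    (n m : ℕ) (hn : 1 ≤ n) :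
    Matrix.det (Matrix.of fun i j : Fin n => (T ^ (i : ℕ)) (p (m + (j : ℕ)))) =
      (-1) ^ n.choose 2 * (∏ j ∈ Finset.range (n - 1), algebraMap R A (Ω (m + j))) *
        Matrix.det (Matrix.of fun i j : Fin m => q (n + m - 1 - (i : ℕ)) (j : ℕ)) := by
  obtain ⟨n, rfl⟩ := Nat.exists_eq_add_of_le' hn
  let f : ℕ → R⟦X⟧ := fun l => PowerSeries.mk fun j => M j l
  let F : ℕ → A⟦X⟧ := fun l => PowerSeries.map (algebraMap R A) (f l)
  let σ := PowerSeries.mk s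
  have σ_mul : σ * PowerSeries.mk r = 1 := mk_mul_mk_eq_one r s (by simp [hr0, hs0]) hs
  have σ_zero : PowerSeries.constantCoeff σ = 1 := by simp [σ, hs0]
  have p_eq (k : ℕ) : p k = borderedDet F k (PowerSeries.mk r) := by
    rw [borderedDet_eq_det_of_ite]
    rcases k.eq_zero_or_pos with rfl | hk
    · simp [hp0, hr0]
    · simpa [F, f] using hp k hk
  have Tp_eq (i k : ℕ) :
      (T ^ i) (p k) = borderedDet (fun l => σ * F l) k (PowerSeries.X ^ i) := by
    rw [p_eq, pow_apply_borderedDet_mk T r (hr0 ▸ hT1) (fun n => hrT (n + 1) n.succ_pos) σ_mul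
      σ_zero]
  have Ω_eq (k : ℕ) : algebraMap R A (Ω k) = (coeffMatrix (fun l => σ * F l) k (k + 1)).det := by
    rw [det_coeffMatrix_mul, σ_zero, one_pow, one_mul, coeffMatrix_map, ← RingHom.map_det, hΩ]
    simp [coeffMatrix, f]
  have q_eq (a l : ℕ) : q a l = PowerSeries.coeff a (σ * F l) := by
    rw [mul_comm, PowerSeries.coeff_mul, Finset.Nat.sum_antidiagonal_eq_sum_range_succ_mk, hq]
    simp [F, f, σ]
  simp only [Tp_eq, Ω_eq, q_eq, Nat.add_sub_cancel, Nat.add_right_comm n 1 m, Nat.add_comm n m]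
  exact det_borderedDet_X_pow (fun l => σ * F l) n m

end Algebra

/-- the main theorem for a general bilinear form on complex
polynomials (Theorem `mth` of the paper). -/
theorem wronskian_type_det_bilinear
    (T : Module.End ℂ (Polynomial ℂ))
    (hTC : ∀ c : ℂ, T (Polynomial.C c) = 0)
    (hTdeg : ∀ f : Polynomial ℂ, 0 < f.natDegree →
      (T f).degree = ((f.natDegree - 1 : ℕ) : WithBot ℕ))
    (r s : ℕ → Polynomial ℂ)
    (hr0 : r 0 = 1) (hrdeg : ∀ n : ℕ, (r n).degree = (n : ℕ))
    (hrT : ∀ n : ℕ, 1 ≤ n → T (r n) = r (n - 1))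
    (hs0 : s 0 = 1)
    (hs : ∀ n : ℕ, 1 ≤ n → ∑ j ∈ Finset.range (n + 1), s j * r (n - j) = 0)
    (B : Polynomial ℂ →ₗ[ℂ] Polynomial ℂ →ₗ[ℂ] ℂ)
    (ψ : ℕ → Polynomial ℂ) (hψdeg : ∀ i : ℕ, (ψ i).degree = (i : ℕ))
    (M : ℕ → ℕ → ℂ) (hM : ∀ j i : ℕ, M j i = B (r j) (ψ i))
    (p : ℕ → Polynomial ℂ) (hp0 : p 0 = 1)
    (hp : ∀ k : ℕ, 1 ≤ k → p k =
      Matrix.det (Matrix.of fun i j : Fin (k + 1) =>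
        if (j : ℕ) < k then Polynomial.C (M (k - (i : ℕ)) (j : ℕ)) else r (k - (i : ℕ))))
    (q : ℕ → ℕ → Polynomial ℂ)
    (hq : ∀ n i : ℕ, q n i = ∑ j ∈ Finset.range (n + 1), Polynomial.C (M j i) * s (n - j))
    (Ω : ℕ → ℂ)
    (hΩ : ∀ k : ℕ, Ω k =
      Matrix.det (Matrix.of fun i j : Fin (k + 1) => M (k - (i : ℕ)) (j : ℕ))) :
    ∀ n m : ℕ, 1 ≤ n → 1 ≤ m → ∀ x : ℂ,
      Matrix.det (Matrix.of fun i j : Fin n =>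
        ((T ^ (i : ℕ)) (p (m + (j : ℕ)))).eval x)
      = (-1 : ℂ) ^ n.choose 2 * (∏ j ∈ Finset.range (n - 1), Ω (m + j)) *
        Matrix.det (Matrix.of fun i j : Fin m =>
          (q (n + m - 1 - (i : ℕ)) (j : ℕ)).eval x) := by
  intro n m hn _ x
  simpa [eval_det_eq_det_map_eval, Polynomial.eval_prod, Matrix.map] using
    congrArg (Polynomial.eval x) (wronskian_type_det_bilinear_general T (by simpa using hTC 1)
      r s hr0 hrT hs0 hs M p hp0 hp q hq Ω hΩ n m hn)
end

section
/- Let T be a linear operator on the space of real polynomials such that deg(T(p)) = deg(p) - 1 for every polynomial p, let u be a real number, and let (r_n)_{n\ge 0} be polynomials with r_0 = 1, deg r_n = n, T(r_n) = r_{n-1} and r_n(u) = 0 for n \ge 1. Assume there are real numbers a_1, a_2, \dots with a_1 = u such that r_n(x) = \sigma_n \prod_{j=1}^n (x - a_j) for n \ge 1, where \sigma_n is the leading coefficient of r_n (and \sigma_0 = 1). Let \mu be a positive Borel measure on \mathbb{R} for which every polynomial is integrable, admitting a sequence (\hat p_n)_{n\ge 0} of monic orthogonal polynomials (deg \hat p_n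 = n, \hat p_n monic, \int \hat p_n \hat p_k d\mu = 0 for n \ne k), and write \|\hat p_j\|^2 = \int \hat p_j^2 d\mu. Then for all integers n \ge 0, m \ge 1: \int_{\mathbb{R}^m} \Lambda^2(x_1,\dots,x_m) \prod_{j=1}^m r_n(x_j) \; d\mu(x_1)\cdots d\mu(x_m) = (-1)^{mn} \, m! \, \sigma_n^m \left( \prod_{j=0}^{m-1} \|\hat p_j\|^2 \right) \left( \prod_{j=0}^{n-1} \sigma_j \right) \cdot \det( T^{i-1}(\hat p_{m+j-1})(u) )_{i,j=1}^n, where the 0\times 0 determinant on the right equals 1 when n = 0. -/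
open MeasureTheory Polynomial

/-!
Andréief's identity turns the integral into `m!` times the determinant of the moments
`∫ p i * r n * p k`, so everything reduces to evaluating this determinant. Consider the `m`
functionals `f ↦ ∫ p i * f` together with the `n` functionals `f ↦ (T ^ i f)(u)`. Pair all of them
with `p 0, …, p (m + n - 1)` and with `r 0, …, r (n - 1), r n * p 0, …, r n * p (m - 1)`. Both
pairing matrices are block triangular: the first by orthogonality, the second because
`(T ^ i (r k))(u) = δ i k` and `r n ∣ r (n + k)` force the functionals `f ↦ (T ^ i f)(u)`, `i < n`,
to vanish on multiples of `r n`. Both families have one member in each degree below `m + n`, so the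
two determinants differ only by the product of the leading coefficients; interchanging the two
groups of functionals accounts for the sign.
-/

theorem det_mul_det_eq_sum_perm {R ι : Type*} [CommRing R] [Fintype ι]
    [DecidableEq ι] (A B : Matrix ι ι R) :
    A.det * B.det = ∑ σ : Equiv.Perm ι,
      ((Equiv.Perm.sign σ : ℤ) : R) * (Matrix.of fun i j => A (σ j) j * B i j).det := by
  rw [A.det_apply', Finset.sum_mul]
  refine Finset.sum_congr rfl fun σ _ => ?_
  rw [Matrix.det_mul_row (fun j => A (σ j) j) B, mul_assoc]

section Andreief

variable {α 𝕜 ι : Type*} [RCLike 𝕜] [MeasurableSpace α] {μ : Measure α} [SigmaFinite μ]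
  [Fintype ι] [DecidableEq ι]

theorem integrable_pi_det {h : ι → ι → α → 𝕜} (hh : ∀ i j, Integrable (h i j) μ) :
    Integrable (fun x : ι → α => (Matrix.of fun i j => h i j (x j)).det)
      (Measure.pi fun _ => μ) := by
  simp only [Matrix.det_apply', Matrix.of_apply]
  exact integrable_finsetSum _ fun σ _ =>
    (Integrable.fintype_prod fun i => hh (σ i) i).const_mul _

theorem integral_pi_det {h : ι → ι → α → 𝕜} (hh : ∀ i j, Integrable (h i j) μ) :
    ∫ x : ι → α, (Matrix.of fun i j => h i j (x j)).det ∂(Measure.pi fun _ => μ) =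
      (Matrix.of fun i j => ∫ t, h i j t ∂μ).det := by
  simp only [Matrix.det_apply', Matrix.of_apply]
  rw [integral_finsetSum _ fun σ _ => (Integrable.fintype_prod fun i => hh (σ i) i).const_mul _]
  refine Finset.sum_congr rfl fun σ _ => ?_
  rw [integral_const_mul, integral_fintype_prod_eq_prod (fun i => h (σ i) i)]

theorem integral_pi_det_mul_det {f g : ι → α → 𝕜}
    (hfg : ∀ i j, Integrable (fun t => f i t * g j t) μ) :
    ∫ x : ι → α, (Matrix.of fun i j => f i (x j)).det * (Matrix.of fun i j => g i (x j)).det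
        ∂(Measure.pi fun _ => μ) =
      (Fintype.card ι).factorial * (Matrix.of fun i j => ∫ t, f i t * g j t ∂μ).det := by
  set G : Matrix ι ι 𝕜 := Matrix.of fun i j => ∫ t, f i t * g j t ∂μ
  have integral_summand (σ : Equiv.Perm ι) :
      ∫ x : ι → α, (Matrix.of fun i j => f (σ j) (x j) * g i (x j)).det
        ∂(Measure.pi fun _ => μ) = (Equiv.Perm.sign σ : ℤ) * G.det := by
    rw [integral_pi_det (h := fun i j t => f (σ j) t * g i t) fun i j => hfg (σ j) i,
      ← Matrix.det_permute, ← Matrix.det_transpose]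
    rfl
  have sign_mul_self (σ : Equiv.Perm ι) :
      ((Equiv.Perm.sign σ : ℤ) : 𝕜) * (Equiv.Perm.sign σ : ℤ) = 1 := by
    rw [← Int.cast_mul, ← Units.val_mul, Int.units_mul_self, Units.val_one, Int.cast_one]
  simp only [det_mul_det_eq_sum_perm, Matrix.of_apply]
  rw [integral_finsetSum _ fun σ _ => (integrable_pi_det
    (h := fun i j t => f (σ j) t * g i t) fun i j => hfg (σ j) i).const_mul _]
  simp only [integral_const_mul, integral_summand, ← mul_assoc, sign_mul_self, one_mul]
  rw [Finset.sum_const, Finset.card_univ, Fintype.card_perm, nsmul_eq_mul]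

end Andreief

section Vandermonde

variable {R : Type*} [CommRing R]

theorem prod_sub_sq_eq_det_vandermonde_sq {m : ℕ} (x : Fin m → R) :
    (∏ i : Fin m, ∏ j ∈ Finset.Ioi i, (x i - x j)) ^ 2 = (Matrix.vandermonde x).det ^ 2 := by
  rw [Matrix.det_vandermonde]
  simp only [← Finset.prod_pow]
  exact Finset.prod_congr rfl fun i _ => Finset.prod_congr rfl fun j _ => sub_sq_comm _ _

theorem prod_sub_sq_mul_prod_eval_eq_det_mul_det {m : ℕ} {p : ℕ → R[X]} (hp : ∀ k, (p k).Monic)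
    (hpdeg : ∀ k, (p k).natDegree = k) (w : R[X]) (x : Fin m → R) :
    (∏ i : Fin m, ∏ j ∈ Finset.Ioi i, (x i - x j)) ^ 2 * ∏ j, w.eval (x j) =
      (Matrix.of fun i j : Fin m => (p i).eval (x j)).det *
        (Matrix.of fun i j : Fin m => (w * p i).eval (x j)).det := by
  have vandermonde_eq : (Matrix.vandermonde x).det =
      (Matrix.of fun i j : Fin m => (p i).eval (x j)).det := by
    rw [Matrix.det_eval_matrixOfPolynomials_eq_det_vandermonde x (fun i => p i)
      (fun i => hpdeg i) (fun i => hp i), ← Matrix.det_transpose]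
    rfl
  have weight_out : (Matrix.of fun i j : Fin m => (w * p i).eval (x j)).det =
      (∏ j, w.eval (x j)) * (Matrix.of fun i j : Fin m => (p i).eval (x j)).det := by
    simp only [eval_mul, ← Matrix.det_mul_row, Matrix.of_apply]
  rw [prod_sub_sq_eq_det_vandermonde_sq, vandermonde_eq, weight_out]
  ring

end Vandermonde

theorem sign_finAddFlip_trans_finCongr (m n : ℕ) :
    Equiv.Perm.sign ((finAddFlip (m := m) (n := n)).trans (finCongr (Nat.add_comm n m))) =
      (-1) ^ (m * n) := by
  have lt_add {k l : ℕ} (i : Fin k) (j : Fin l) : (i : ℕ) < k + j := by omega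
  have ite_ite_one (P : Prop) [Decidable P] :
      (if P then (if P then (1 : ℤˣ) else -1) else 1) = 1 := by
    split_ifs <;> rfl
  rw [Equiv.Perm.sign_eq_prod_prod_Ioi]
  simp only [← Finset.filter_lt_eq_Ioi, Finset.prod_filter, Fin.prod_univ_add]
  simp only [Fin.lt_def, Equiv.trans_apply, finAddFlip_apply_castAdd, finAddFlip_apply_natAdd,
    finCongr_apply, Fin.val_cast, Fin.val_castAdd, Fin.val_natAdd, Nat.add_lt_add_iff_left,
    lt_add, (lt_add _ _).not_gt, ite_ite_one, if_true, if_false, Finset.prod_const_one, one_mul,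
    mul_one, Finset.prod_const, Finset.card_univ, Fintype.card_fin, ← pow_mul, Nat.mul_comm n m]

section PairingMatrix

/-- The matrix `⟨φ i, x j⟩` of a finite family of functionals against the initial segment of a
sequence of vectors. The vectors are indexed by `ℕ`, so that the same sequence can be paired with
`m + n` and with `n + m` functionals. -/
def pairingMatrix {R M : Type*} [CommRing R] [AddCommGroup M] [Module R M] {N : ℕ}
    (φ : Fin N → Module.Dual R M) (x : ℕ → M) : Matrix (Fin N) (Fin N) R :=
  Matrix.of fun i j => φ i (x j)

variable {R M : Type*} [CommRing R] [AddCommGroup M] [Module R M] {m n : ℕ}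

theorem det_pairingMatrix_append_comm (φ : Fin m → Module.Dual R M) (ψ : Fin n → Module.Dual R M)
    (x : ℕ → M) : (pairingMatrix (Fin.append φ ψ) x).det =
      (-1) ^ (m * n) * (pairingMatrix (Fin.append ψ φ) x).det := by
  set e := finCongr (Nat.add_comm n m)
  set π : Equiv.Perm (Fin (m + n)) := finAddFlip.trans e
  have rows_permuted : pairingMatrix (Fin.append φ ψ) x =
      ((pairingMatrix (Fin.append ψ φ) x).submatrix e.symm e.symm).submatrix π id := by
    ext i j
    induction i using Fin.addCases <;> simp [pairingMatrix, π, e]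
  rw [rows_permuted, Matrix.det_permute, Matrix.det_submatrix_equiv_self,
    sign_finAddFlip_trans_finCongr]
  push_cast
  rfl

theorem det_pairingMatrix_append_of_apply_eq_zero {φ : Fin m → Module.Dual R M}
    (ψ : Fin n → Module.Dual R M) {x : ℕ → M} (h : ∀ i k, φ i (x (m + k)) = 0) :
    (pairingMatrix (Fin.append φ ψ) x).det =
      (pairingMatrix φ x).det * (pairingMatrix ψ fun k => x (m + k)).det := by
  rw [← Matrix.det_submatrix_equiv_self finSumFinEquiv,
    ← Matrix.det_fromBlocks_zero₁₂ _ (Matrix.of fun (i : Fin n) (j : Fin m) => ψ i (x j)) _]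
  congr 1
  ext (i | i) (j | j) <;> simp [pairingMatrix, h]

theorem det_pairingMatrix_eq_mul_prod_leadingCoeff {N : ℕ} (φ : Fin N → Module.Dual R R[X])
    {f : ℕ → R[X]} (hf : ∀ k, (f k).natDegree = k) :
    (pairingMatrix φ f).det = (pairingMatrix φ fun k => X ^ k).det *
      ∏ k ∈ Finset.range N, (f k).leadingCoeff := by
  have expand_in_monomials : pairingMatrix φ f = pairingMatrix φ (fun k => X ^ k) *
      Matrix.of fun i j : Fin N => (f j).coeff i := by
    ext i j
    have hj : (f j).natDegree < N := by simp [hf]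
    simp only [pairingMatrix, Matrix.mul_apply, Matrix.of_apply]
    conv_lhs => rw [(f j).as_sum_range' N hj, ← Fin.sum_univ_eq_sum_range
      (fun k => monomial k ((f j).coeff k)), map_sum]
    refine Finset.sum_congr rfl fun k _ => ?_
    rw [← smul_X_eq_monomial, map_smul, smul_eq_mul, mul_comm]
  rw [expand_in_monomials, Matrix.det_mul, Matrix.det_of_isUpperTriangular
    (Matrix.matrixOfPolynomials_blockTriangular (fun i : Fin N => f i) fun i => (hf i).le),
    ← Fin.prod_univ_eq_prod_range (fun k => (f k).leadingCoeff)]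
  simp only [Matrix.of_apply, leadingCoeff, hf]

end PairingMatrix

/-- The functional `f ↦ (T ^ i f)(u)`. It is the coefficient of the `i`-th basic polynomial in the
expansion of `f`; for `T` the derivative it is the Taylor coefficient of `f` at `u`, times `i!`. -/
noncomputable def taylorCoeff {R : Type*} [CommRing R] (T : Module.End R R[X]) (u : R) (i : ℕ) :
    Module.Dual R R[X] :=
  leval u ∘ₗ (T ^ i)

/-- The basic sequence of a degree-lowering operator `T` with base point `u`, in the normalization
`T (r (k + 1)) = r k` (as for `X ^ k / k!` when `T` is the derivative and `u = 0`). -/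
structure IsBasicSequence {K : Type*} [Field K] (T : Module.End K K[X]) (u : K) (r : ℕ → K[X]) :
    Prop where
  map_one : T 1 = 0
  zero : r 0 = 1
  degree_eq (k : ℕ) : (r k).degree = k
  map_succ (k : ℕ) : T (r (k + 1)) = r k
  eval_succ (k : ℕ) : (r (k + 1)).eval u = 0

namespace IsBasicSequence

variable {K : Type*} [Field K] {T : Module.End K K[X]} {u : K} {r : ℕ → K[X]}

theorem ne_zero (hr : IsBasicSequence T u r) (k : ℕ) : r k ≠ 0 :=
  degree_ne_bot.mp (by simp [hr.degree_eq k])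

theorem taylorCoeff_apply (hr : IsBasicSequence T u r) (i k : ℕ) :
    taylorCoeff T u i (r k) = if i = k then 1 else 0 := by
  induction i generalizing k with
  | zero => cases k <;> simp [taylorCoeff, hr.zero, hr.eval_succ]
  | succ i ih =>
    have shift (f : K[X]) : taylorCoeff T u (i + 1) f = taylorCoeff T u i (T f) := by
      simp only [taylorCoeff, pow_succ, LinearMap.comp_apply, Module.End.mul_apply]
    cases k <;> simp [shift, hr.zero, hr.map_one, hr.map_succ, ih]

theorem taylorCoeff_mul_eq_zero (hr : IsBasicSequence T u r) {n i : ℕ} (hi : i < n)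
    (hdvd : ∀ k, r n ∣ r (n + k)) (q : K[X]) : taylorCoeff T u i (r n * q) = 0 := by
  choose s hs using hdvd
  have degree_s (k : ℕ) : (s k).degree = k := by
    have h := congrArg degree (hs k)
    rw [degree_mul, hr.degree_eq, hr.degree_eq, Nat.cast_add] at h
    exact (WithBot.add_left_cancel (WithBot.natCast_ne_bot n) h).symm
  let S : Polynomial.Sequence K := ⟨s, degree_s⟩
  have span_s : Submodule.span K (Set.range s) = ⊤ :=
    S.span fun k => (leadingCoeff_ne_zero.mpr (S.ne_zero k)).isUnit
  have vanishes_on_s : Set.EqOn (taylorCoeff T u i ∘ₗ LinearMap.mulLeft K (r n))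
      (0 : Module.Dual K K[X]) (Set.range s) := by
    rintro _ ⟨k, rfl⟩
    rw [LinearMap.comp_apply, LinearMap.mulLeft_apply, ← hs, hr.taylorCoeff_apply,
      if_neg (by omega), LinearMap.zero_apply]
  exact LinearMap.congr_fun (LinearMap.ext_on span_s vanishes_on_s) q

theorem det_pairingMatrix_taylorCoeff (hr : IsBasicSequence T u r) {f : ℕ → K[X]} {n : ℕ}
    (hf : ∀ k < n, f k = r k) :
    (pairingMatrix (fun i : Fin n => taylorCoeff T u i) f).det = 1 := by
  convert Matrix.det_one (n := Fin n) (R := K) using 2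
  ext i j
  simp only [pairingMatrix, Matrix.of_apply, hf j j.isLt, hr.taylorCoeff_apply, Matrix.one_apply,
    Fin.ext_iff]

end IsBasicSequence

section Splice

variable {R : Type*} [CommRing R]

/-- The sequence `r 0, …, r (n - 1), r n * p 0, r n * p 1, …`, which has one member in each degree
whenever `r` and `p` do. -/
noncomputable def spliceMul (r p : ℕ → R[X]) (n k : ℕ) : R[X] :=
  if k < n then r k else r n * p (k - n)

theorem spliceMul_of_lt (r p : ℕ → R[X]) {n k : ℕ} (hk : k < n) : spliceMul r p n k = r k :=
  if_pos hk

theorem spliceMul_add (r p : ℕ → R[X]) (n k : ℕ) : spliceMul r p n (n + k) = r n * p k := by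
  simp [spliceMul]

variable {r p : ℕ → R[X]}

theorem natDegree_spliceMul (hr : ∀ k, (r k).degree = k) (hp : ∀ k, (p k).Monic)
    (hpdeg : ∀ k, (p k).natDegree = k) (n k : ℕ) : (spliceMul r p n k).natDegree = k := by
  have natDegree_r (k : ℕ) : (r k).natDegree = k := natDegree_eq_of_degree_eq_some (hr k)
  have r_ne_zero : r n ≠ 0 := degree_ne_bot.mp (by simp [hr])
  rcases lt_or_ge k n with hk | hk
  · rw [spliceMul_of_lt r p hk, natDegree_r]
  · obtain ⟨l, rfl⟩ := Nat.exists_eq_add_of_le hk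
    rw [spliceMul_add, mul_comm, (hp l).natDegree_mul' r_ne_zero, natDegree_r, hpdeg,
      add_comm]

theorem prod_leadingCoeff_spliceMul (hp : ∀ k, (p k).Monic) (m n : ℕ) :
    ∏ k ∈ Finset.range (n + m), (spliceMul r p n k).leadingCoeff =
      (∏ k ∈ Finset.range n, (r k).leadingCoeff) * (r n).leadingCoeff ^ m := by
  rw [Finset.prod_range_add, Finset.prod_congr rfl fun k hk =>
    congrArg leadingCoeff (spliceMul_of_lt r p (Finset.mem_range.mp hk))]
  simp only [spliceMul_add, leadingCoeff_mul_monic (hp _), Finset.prod_const, Finset.card_range]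

end Splice

/-- Monic orthogonal polynomials with respect to a functional `L`, which is typically integration
against a measure. -/
structure IsMonicOrthogonal {R : Type*} [CommRing R] (L : R[X] → R) (p : ℕ → R[X]) : Prop where
  monic (k : ℕ) : (p k).Monic
  natDegree_eq (k : ℕ) : (p k).natDegree = k
  orthogonal {j k : ℕ} (h : j ≠ k) : L (p j * p k) = 0

namespace IsMonicOrthogonal

variable {R : Type*} [CommRing R] {L : Module.Dual R R[X]} {p : ℕ → R[X]}

theorem det_pairingMatrix_mulLeft (hp : IsMonicOrthogonal L p) (m : ℕ) :
    (pairingMatrix (fun i : Fin m => L ∘ₗ LinearMap.mulLeft R (p i)) p).det =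
      ∏ k ∈ Finset.range m, L (p k ^ 2) := by
  have eq_diagonal : pairingMatrix (fun i : Fin m => L ∘ₗ LinearMap.mulLeft R (p i)) p =
      Matrix.diagonal fun k : Fin m => L (p k ^ 2) := by
    ext i j
    rcases eq_or_ne i j with rfl | hij
    · simp [pairingMatrix, sq]
    · simp [pairingMatrix, hij, hp.orthogonal (Fin.val_ne_of_ne hij)]
  rw [eq_diagonal, Matrix.det_diagonal, Fin.prod_univ_eq_prod_range (fun k => L (p k ^ 2))]

theorem det_pairingMatrix_mul_basicSequence {K : Type*} [Field K] {L : Module.Dual K K[X]}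
    {p r : ℕ → K[X]} {T : Module.End K K[X]} {u : K} (hp : IsMonicOrthogonal L p)
    (hr : IsBasicSequence T u r) {n : ℕ} (hdvd : ∀ k, r n ∣ r (n + k)) (m : ℕ) :
    (pairingMatrix (fun i : Fin m => L ∘ₗ LinearMap.mulLeft K (p i)) fun k => r n * p k).det =
      (-1) ^ (m * n) * (r n).leadingCoeff ^ m * (∏ k ∈ Finset.range m, L (p k ^ 2)) *
        (∏ k ∈ Finset.range n, (r k).leadingCoeff) *
        (pairingMatrix (fun i : Fin n => taylorCoeff T u i) fun k => p (m + k)).det := by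
  set φ : Fin m → Module.Dual K K[X] := fun i => L ∘ₗ LinearMap.mulLeft K (p i)
  set ψ : Fin n → Module.Dual K K[X] := fun i => taylorCoeff T u i
  set f : ℕ → K[X] := spliceMul r p n
  have φ_vanishes (i : Fin m) (k : ℕ) : φ i (p (m + k)) = 0 := hp.orthogonal (by omega)
  have ψ_vanishes (i : Fin n) (k : ℕ) : ψ i (f (n + k)) = 0 := by
    simp only [f, ψ, spliceMul_add]
    exact hr.taylorCoeff_mul_eq_zero i.isLt hdvd _
  have det_on_p : (pairingMatrix (Fin.append φ ψ) p).det =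
      (∏ k ∈ Finset.range m, L (p k ^ 2)) * (pairingMatrix ψ fun k => p (m + k)).det := by
    rw [det_pairingMatrix_append_of_apply_eq_zero ψ φ_vanishes, hp.det_pairingMatrix_mulLeft]
  have det_on_f : (pairingMatrix (Fin.append ψ φ) f).det =
      (pairingMatrix φ fun k => r n * p k).det := by
    rw [det_pairingMatrix_append_of_apply_eq_zero φ ψ_vanishes,
      hr.det_pairingMatrix_taylorCoeff fun k hk => spliceMul_of_lt r p hk, one_mul]
    simp only [f, spliceMul_add]
  have change_of_family : (pairingMatrix (Fin.append ψ φ) f).det =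
      (pairingMatrix (Fin.append ψ φ) p).det *
        ((∏ k ∈ Finset.range n, (r k).leadingCoeff) * (r n).leadingCoeff ^ m) := by
    rw [det_pairingMatrix_eq_mul_prod_leadingCoeff _
        (natDegree_spliceMul hr.degree_eq hp.monic hp.natDegree_eq n),
      det_pairingMatrix_eq_mul_prod_leadingCoeff _ hp.natDegree_eq,
      prod_leadingCoeff_spliceMul hp.monic]
    simp only [(hp.monic _).leadingCoeff, Finset.prod_const_one, mul_one]
  rw [← det_on_f, change_of_family, det_pairingMatrix_append_comm, det_on_p, Nat.mul_comm n m]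
  ring

end IsMonicOrthogonal

section Measure

variable {𝕜 : Type*} [RCLike 𝕜] [MeasurableSpace 𝕜] {μ : Measure 𝕜}

/-- Integration against `μ`, as a functional on polynomials. -/
noncomputable def momentFunctional (μ : Measure 𝕜)
    (hμ : ∀ f : 𝕜[X], Integrable (fun x => f.eval x) μ) : Module.Dual 𝕜 𝕜[X] where
  toFun f := ∫ x, f.eval x ∂μ
  map_add' f g := by simp only [eval_add, integral_add (hμ f) (hμ g)]
  map_smul' c f := by simp only [eval_smul, integral_smul, RingHom.id_apply]

theorem integral_prod_sub_sq_mul_prod_eval [SigmaFinite μ]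
    (hμ : ∀ f : 𝕜[X], Integrable (fun x => f.eval x) μ) {p : ℕ → 𝕜[X]} (hp : ∀ k, (p k).Monic)
    (hpdeg : ∀ k, (p k).natDegree = k) (w : 𝕜[X]) (m : ℕ) :
    ∫ x : Fin m → 𝕜, (∏ i : Fin m, ∏ j ∈ Finset.Ioi i, (x i - x j)) ^ 2 * ∏ j, w.eval (x j)
        ∂(Measure.pi fun _ => μ) =
      m.factorial * (pairingMatrix
        (fun i : Fin m => momentFunctional μ hμ ∘ₗ LinearMap.mulLeft 𝕜 (p i))
        fun k => w * p k).det := by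
  have integrable_mul (i j : Fin m) :
      Integrable (fun t => (p i).eval t * (w * p j).eval t) μ := by
    simpa only [eval_mul] using hμ (p i * (w * p j))
  simp only [prod_sub_sq_mul_prod_eval_eq_det_mul_det hp hpdeg]
  rw [integral_pi_det_mul_det (f := fun (i : Fin m) t => (p i).eval t)
    (g := fun (j : Fin m) t => (w * p j).eval t) integrable_mul, Fintype.card_fin]
  simp only [pairingMatrix, momentFunctional, LinearMap.comp_apply, LinearMap.mulLeft_apply,
    LinearMap.coe_mk, AddHom.coe_mk, eval_mul]

end Measure

theorem dvd_of_le_of_eq_C_mul_prod_X_sub_C {K : Type*} [Field K] {r : ℕ → K[X]} {a : ℕ → K}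
    (hr : ∀ n, r n ≠ 0)
    (hfac : ∀ n, r n = C (r n).leadingCoeff * ∏ j ∈ Finset.Icc 1 n, (X - C (a j)))
    {n k : ℕ} (h : n ≤ k) : r n ∣ r k := by
  rw [hfac n, hfac k, (isUnit_C.mpr (leadingCoeff_ne_zero.mpr (hr n)).isUnit).mul_left_dvd]
  exact (Finset.prod_dvd_prod_of_subset _ _ _ (Finset.Icc_subset_Icc_right h)).mul_left _

theorem selberg_type_integral_general {𝕜 : Type*} [RCLike 𝕜] [MeasurableSpace 𝕜]
    {T : Module.End 𝕜 𝕜[X]} {u : 𝕜} {r : ℕ → 𝕜[X]} (hr : IsBasicSequence T u r)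
    {μ : Measure 𝕜} (hμ : ∀ f : 𝕜[X], Integrable (fun x => f.eval x) μ)
    {p : ℕ → 𝕜[X]} (hp : IsMonicOrthogonal (fun f => ∫ x, f.eval x ∂μ) p)
    {n : ℕ} (hdvd : ∀ k, r n ∣ r (n + k)) (m : ℕ) :
    ∫ x : Fin m → 𝕜,
        (∏ i : Fin m, ∏ j ∈ Finset.Ioi i, (x i - x j)) ^ 2 * ∏ j : Fin m, (r n).eval (x j)
        ∂(Measure.pi fun _ => μ) =
      (-1) ^ (m * n) * m.factorial * (r n).leadingCoeff ^ m *
        (∏ j ∈ Finset.range m, ∫ t, ((p j).eval t) ^ 2 ∂μ) *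
        (∏ j ∈ Finset.range n, (r j).leadingCoeff) *
        (Matrix.of fun i j : Fin n => ((T ^ (i : ℕ)) (p (m + (j : ℕ)))).eval u).det := by
  have : IsFiniteMeasure μ := by
    simpa [integrable_const_iff] using hμ 1
  have hp' : IsMonicOrthogonal (momentFunctional μ hμ) p := hp
  have norm_sq (j : ℕ) : momentFunctional μ hμ (p j ^ 2) = ∫ t, ((p j).eval t) ^ 2 ∂μ := by
    simp only [momentFunctional, LinearMap.coe_mk, AddHom.coe_mk, eval_pow]
  rw [integral_prod_sub_sq_mul_prod_eval hμ hp.monic hp.natDegree_eq,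
    hp'.det_pairingMatrix_mul_basicSequence hr hdvd]
  simp only [norm_sq, pairingMatrix, taylorCoeff, LinearMap.comp_apply, leval_apply]
  ring

/-- Selberg-type integral formula (Theorem `tise` of the paper). -/
theorem selberg_type_integral
    (T : Module.End ℝ (Polynomial ℝ))
    (hTC : ∀ c : ℝ, T (Polynomial.C c) = 0)
    (hTdeg : ∀ f : Polynomial ℝ, 0 < f.natDegree →
      (T f).degree = ((f.natDegree - 1 : ℕ) : WithBot ℕ))
    (u : ℝ) (r : ℕ → Polynomial ℝ)
    (hr0 : r 0 = 1) (hrdeg : ∀ n : ℕ, (r n).degree = (n : ℕ))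
    (hrT : ∀ n : ℕ, 1 ≤ n → T (r n) = r (n - 1))
    (hru : ∀ n : ℕ, 1 ≤ n → (r n).eval u = 0)
    (a : ℕ → ℝ) (ha1 : a 1 = u)
    (hrfac : ∀ n : ℕ, 1 ≤ n → r n =
      Polynomial.C ((r n).leadingCoeff) *
        ∏ j ∈ Finset.Icc 1 n, (Polynomial.X - Polynomial.C (a j)))
    (μ : Measure ℝ) [SigmaFinite μ]
    (hint : ∀ f : Polynomial ℝ, Integrable (fun x => f.eval x) μ)
    (p : ℕ → Polynomial ℝ) (hmonic : ∀ n : ℕ, (p n).Monic)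
    (hpdeg : ∀ n : ℕ, (p n).natDegree = n)
    (hporth : ∀ n k : ℕ, n ≠ k → ∫ x, (p n).eval x * (p k).eval x ∂μ = 0) :
    ∀ n m : ℕ, 1 ≤ m →
      (∫ x : Fin m → ℝ,
        (∏ i : Fin m, ∏ j ∈ Finset.Ioi i, (x i - x j)) ^ 2 *
          ∏ j : Fin m, (r n).eval (x j)
        ∂(Measure.pi fun _ => μ))
      = (-1 : ℝ) ^ (m * n) * (m.factorial : ℝ) * (r n).leadingCoeff ^ m *
        (∏ j ∈ Finset.range m, ∫ t, ((p j).eval t) ^ 2 ∂μ) *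
        (∏ j ∈ Finset.range n, (r j).leadingCoeff) *
        Matrix.det (Matrix.of fun i j : Fin n =>
          ((T ^ (i : ℕ)) (p (m + (j : ℕ)))).eval u) := by
  intro n m _
  have hr : IsBasicSequence T u r :=
    ⟨hTC 1, hr0, hrdeg, fun k => hrT (k + 1) k.succ_pos, fun k => hru (k + 1) k.succ_pos⟩
  have hp : IsMonicOrthogonal (fun f => ∫ x, f.eval x ∂μ) p :=
    ⟨hmonic, hpdeg, fun {j k} hjk => by simpa only [eval_mul] using hporth j k hjk⟩
  have hfac (k : ℕ) : r k = C (r k).leadingCoeff * ∏ j ∈ Finset.Icc 1 k, (X - C (a j)) :=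
    k.eq_zero_or_pos.elim (by rintro rfl; simp [hr0]) (hrfac k)
  exact selberg_type_integral_general hr hint hp
    (fun k => dvd_of_le_of_eq_C_mul_prod_X_sub_C hr.ne_zero hfac (Nat.le_add_right n k)) m
end

section
/- For all real numbers x, u and all natural numbers n, i, g with 0 \le g \le n: \binom{g+i}{i} \binom{x+u+n+i-1}{n-g} (x-i)_{n-g} = \sum_{j=g}^{n} (-1)^{j-g} (u+g+i)_{j-g} \, (x)_{n-j} \, \binom{j}{j-g} \binom{g+i}{j} \binom{x+u+n-1}{n-j}, where \binom{g+i}{i}, \binom{j}{j-g}, \binom{g+i}{j} are ordinary binomial coefficients (equal to 0 when the lower index exceeds the upper index) and the binomial coefficients with real upper argument are generalized binomial coefficients. -/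
/-- The generalized binomial coefficient `x choose l = x(x-1)⋯(x-l+1)/l!`. -/
noncomputable def gbinom (x : ℝ) (l : ℕ) : ℝ :=
  (∏ k ∈ Finset.range l, (x - k)) / l.factorial

/-- The Pochhammer symbol `(y)_l = y (y+1) ⋯ (y+l-1)`. -/
noncomputable def poch (y : ℝ) (l : ℕ) : ℝ := ∏ k ∈ Finset.range l, (y + k)

/-!
The identity is the Pfaff–Saalschütz sum with denominators cleared.
Write `F a b x k l = (a)_k (b)_k (x)_l (x + a + b + k)_l`. Because
`(x + l) (x + a + b + k) + (a + k) (b + k) = (x + b) (x + l) + (x + b + k + l) (a + k)`,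
Pascal's rule gives for `S_m(a, x) = ∑_{k + l = m} C(m, k) F a b x k l` the recursion
`S_{m+1}(a, x) = (x + b) x S_m(a, x + 1) + (x + b + m) a S_m(a + 1, x)`,
which `(x + a)_m (x + b)_m` satisfies as well. Dividing by `m!` and taking `a = -w` turns `(a)_k`
into `(-1)^k k! C(w, k)`. Now set `b = u + g + w`, `m = n - g`, `k = j - g`, multiply by
`C(g + w, g)` and use `C(g + w, g) C(w, k) = C(g + k, k) C(g + w, g + k)`.
-/

open Finset Polynomial

section CommSemiring

variable {R : Type*} [CommSemiring R]

theorem ascPochhammer_eval_succ_left (n : ℕ) (a : R) :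
    (ascPochhammer R (n + 1)).eval a = a * (ascPochhammer R n).eval (a + 1) := by
  simp [ascPochhammer_succ_left, eval_comp]

theorem mul_ascPochhammer_eval_add_one (n : ℕ) (a : R) :
    a * (ascPochhammer R n).eval (a + 1) = (ascPochhammer R n).eval a * (a + n) := by
  rw [← ascPochhammer_eval_succ_left, ascPochhammer_succ_eval]

theorem ascPochhammer_eval_eq_prod_range (n : ℕ) (a : R) :
    (ascPochhammer R n).eval a = ∏ k ∈ range n, (a + k) := by
  induction n with
  | zero => simp
  | succ n ih => rw [ascPochhammer_succ_eval, ih, prod_range_succ]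

/-- The summand of the Pfaff–Saalschütz sum without its binomial coefficient, cleared of
denominators. It is indexed by `(k, l)` with `k + l = m` so that no subtraction `m - k` occurs. -/
noncomputable def saalschutzTerm (a b x : R) (k l : ℕ) : R :=
  (ascPochhammer R k).eval a * (ascPochhammer R k).eval b * (ascPochhammer R l).eval x *
    (ascPochhammer R l).eval (x + a + b + k)

theorem saalschutzTerm_succ_right_add_succ_left (a b x : R) (k l : ℕ) :
    saalschutzTerm a b x k (l + 1) + saalschutzTerm a b x (k + 1) l =
      (x + b) * x * saalschutzTerm a b (x + 1) k l +
        (x + b + (k + l : ℕ)) * a * saalschutzTerm (a + 1) b x k l := by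
  have shift_x : x + 1 + a + b + k = x + a + b + k + 1 := by ring
  have shift_a : x + (a + 1) + b + k = x + a + b + k + 1 := by ring
  have shift_k : x + a + b + (k + 1 : ℕ) = x + a + b + k + 1 := by push_cast; ring
  simp only [saalschutzTerm, shift_x, shift_a, shift_k]
  set A := (ascPochhammer R k).eval a
  set B := (ascPochhammer R k).eval b
  set X := (ascPochhammer R l).eval x
  set C := (ascPochhammer R l).eval (x + a + b + k + 1)
  have hx : x * (ascPochhammer R l).eval (x + 1) = X * (x + l) :=
    mul_ascPochhammer_eval_add_one l x
  have ha : a * (ascPochhammer R k).eval (a + 1) = A * (a + k) :=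
    mul_ascPochhammer_eval_add_one k a
  calc
    _ = A * B * X * C * ((x + l) * (x + a + b + k) + (a + k) * (b + k)) := by
      rw [ascPochhammer_eval_succ_left l (x + a + b + k), ascPochhammer_succ_eval l x,
        ascPochhammer_succ_eval k a, ascPochhammer_succ_eval k b]
      ring
    _ = A * B * X * C * ((x + b) * (x + l) + (x + b + (k + l : ℕ)) * (a + k)) := by
      push_cast; ring
    _ = (x + b) * A * B * C * (X * (x + l)) +
          (x + b + (k + l : ℕ)) * B * X * C * (A * (a + k)) := by ring
    _ = _ := by rw [← hx, ← ha]; ring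

theorem sum_antidiagonal_succ_choose_mul_saalschutzTerm (a b x : R) (m : ℕ) :
    ∑ p ∈ antidiagonal (m + 1), ((m + 1).choose p.1 : R) * saalschutzTerm a b x p.1 p.2 =
      (x + b) * x *
          ∑ p ∈ antidiagonal m, (m.choose p.1 : R) * saalschutzTerm a b (x + 1) p.1 p.2 +
        (x + b + m) * a *
          ∑ p ∈ antidiagonal m, (m.choose p.1 : R) * saalschutzTerm (a + 1) b x p.1 p.2 := by
  rw [sum_antidiagonal_choose_succ_mul, mul_sum, mul_sum, ← sum_add_distrib, ← sum_add_distrib]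
  refine sum_congr rfl fun ⟨k, l⟩ hkl ↦ ?_
  obtain rfl : k + l = m := mem_antidiagonal.mp hkl
  dsimp only
  rw [← Nat.choose_symm_add, ← mul_add, saalschutzTerm_succ_right_add_succ_left]
  ring

theorem sum_antidiagonal_choose_mul_saalschutzTerm (a b x : R) (m : ℕ) :
    ∑ p ∈ antidiagonal m, (m.choose p.1 : R) * saalschutzTerm a b x p.1 p.2 =
      (ascPochhammer R m).eval (x + a) * (ascPochhammer R m).eval (x + b) := by
  induction m generalizing a x with
  | zero => simp [saalschutzTerm]
  | succ m ih =>
    set P := (ascPochhammer R m).eval (x + a + 1)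
    calc
      _ = (x + b) * x * (P * (ascPochhammer R m).eval (x + b + 1)) +
            (x + b + m) * a * (P * (ascPochhammer R m).eval (x + b)) := by
        rw [sum_antidiagonal_succ_choose_mul_saalschutzTerm, ih, ih, add_right_comm x 1 a,
          add_right_comm x 1 b, ← add_assoc x a 1]
      _ = x * P * ((x + b) * (ascPochhammer R m).eval (x + b + 1)) +
            a * P * ((ascPochhammer R m).eval (x + b) * (x + b + m)) := by ring
      _ = (x + a) * P * (ascPochhammer R (m + 1)).eval (x + b) := by
        rw [← ascPochhammer_eval_succ_left, ← ascPochhammer_succ_eval]; ring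
      _ = _ := by rw [← ascPochhammer_eval_succ_left]

end CommSemiring

section BinomialRing

variable {R : Type*} [CommRing R] [BinomialRing R]

theorem ascPochhammer_eval_eq_factorial_mul_choose (y : R) (n : ℕ) :
    (ascPochhammer R n).eval y = n.factorial * Ring.choose (y + n - 1) n := by
  rw [← ascPochhammer_smeval_eq_eval, ← Ring.factorial_nsmul_multichoose_eq_ascPochhammer,
    Ring.multichoose_eq, nsmul_eq_mul]

theorem ascPochhammer_eval_neg_eq_factorial_mul_choose (w : R) (n : ℕ) :
    (ascPochhammer R n).eval (-w) = n.factorial * ((-1) ^ n * Ring.choose w n) := by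
  rw [← ascPochhammer_smeval_eq_eval, ascPochhammer_smeval_neg_eq_descPochhammer,
    Ring.descPochhammer_eq_factorial_smul_choose, nsmul_eq_mul, Units.smul_def, zsmul_eq_mul,
    Int.coe_negOnePow_natCast]
  push_cast
  ring

theorem sum_antidiagonal_choose_mul_ascPochhammer_mul_choose (w b x : R) (m : ℕ) :
    ∑ p ∈ antidiagonal m, (-1) ^ p.1 * Ring.choose w p.1 * (ascPochhammer R p.1).eval b *
        (ascPochhammer R p.2).eval x * Ring.choose (x + b - w + m - 1) p.2 =
      Ring.choose (x + b + m - 1) m * (ascPochhammer R m).eval (x - w) := by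
  have := BinomialRing.toIsAddTorsionFree (R := R)
  rw [← nsmul_right_inj m.factorial_ne_zero, nsmul_eq_mul, nsmul_eq_mul, ← mul_assoc,
    ← ascPochhammer_eval_eq_factorial_mul_choose, mul_comm (eval _ _), sub_eq_add_neg x w,
    ← sum_antidiagonal_choose_mul_saalschutzTerm, mul_sum]
  refine sum_congr rfl fun ⟨k, l⟩ hkl ↦ ?_
  obtain rfl : k + l = m := mem_antidiagonal.mp hkl
  have hfact : ((k + l).factorial : R) = (k + l).choose k * k.factorial * l.factorial := by
    rw [← Nat.add_choose_mul_factorial_mul_factorial, Nat.choose_symm_add]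
    push_cast
    rfl
  have hupper : x + -w + b + k + l - 1 = x + b - w + (k + l : ℕ) - 1 := by push_cast; ring
  rw [saalschutzTerm, ascPochhammer_eval_neg_eq_factorial_mul_choose,
    ascPochhammer_eval_eq_factorial_mul_choose (x + -w + b + k), hupper, hfact]
  ring

theorem gbinom_identity_three_general (x u w : R) (n g : ℕ) (hg : g ≤ n) :
    Ring.choose (g + w) g * Ring.choose (x + u + n + w - 1) (n - g) *
        (ascPochhammer R (n - g)).eval (x - w) =
      ∑ j ∈ Icc g n, (-1) ^ (j - g) * (ascPochhammer R (j - g)).eval (u + g + w) *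
        (ascPochhammer R (n - j)).eval x * (j.choose (j - g) : R) * Ring.choose (g + w) j *
          Ring.choose (x + u + n - 1) (n - j) := by
  obtain ⟨m, rfl⟩ := Nat.exists_eq_add_of_le hg
  have hleft : x + u + (g + m : ℕ) + w - 1 = x + (u + g + w) + m - 1 := by push_cast; ring
  have hright : x + u + (g + m : ℕ) - 1 = x + (u + g + w) - w + m - 1 := by push_cast; ring
  rw [Nat.add_sub_cancel_left, hleft, hright, mul_assoc,
    ← sum_antidiagonal_choose_mul_ascPochhammer_mul_choose, mul_sum,
    Nat.sum_antidiagonal_eq_sum_range_succ_mk, ← Ico_add_one_right_eq_Icc, sum_Ico_eq_sum_range,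
    Nat.add_assoc, Nat.add_sub_cancel_left]
  refine sum_congr rfl fun k hk ↦ ?_
  obtain ⟨l, rfl⟩ := Nat.exists_eq_add_of_le (mem_range_succ_iff.mp hk)
  simp only [Nat.add_sub_add_left, Nat.add_sub_cancel_left]
  have hchoose : ((g + k).choose k : R) * Ring.choose (g + w) (g + k) =
      Ring.choose (g + w) g * Ring.choose w k := by
    rw [← Nat.choose_symm_add]
    simpa only [nsmul_eq_mul, add_comm k g, add_comm w] using Ring.choose_add_smul_choose w k g
  linear_combination (-(-1) ^ k * (ascPochhammer R k).eval (u + g + w) *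
    (ascPochhammer R l).eval x * Ring.choose (x + (u + g + w) - w + (k + l : ℕ) - 1) l) *
      hchoose

end BinomialRing

theorem gbinom_eq_ringChoose (x : ℝ) (l : ℕ) : gbinom x l = Ring.choose x l := by
  rw [gbinom, ← descPochhammer_eval_eq_prod_range, descPochhammer_eval_eq_ascPochhammer,
    Ring.choose_eq_smul, descPochhammer_smeval_eq_ascPochhammer,
    ascPochhammer_smeval_eq_eval, smul_eq_mul, div_eq_inv_mul]

theorem poch_eq_ascPochhammer_eval (y : ℝ) (l : ℕ) : poch y l = (ascPochhammer ℝ l).eval y :=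
  (ascPochhammer_eval_eq_prod_range l y).symm

/-- the combinatorial identity
`C(g+i,i) C(x+u+n+i-1, n-g) (x-i)_{n-g}
  = ∑_{j=g}^{n} (-1)^{j-g} (u+g+i)_{j-g} (x)_{n-j} C(j,j-g) C(g+i,j) C(x+u+n-1, n-j)`. -/
theorem gbinom_identity_three (x u : ℝ) (n i g : ℕ) (hg : g ≤ n) :
    ((g + i).choose i : ℝ) * gbinom (x + u + n + i - 1) (n - g) * poch (x - i) (n - g)
    = ∑ j ∈ Finset.Icc g n,
        (-1 : ℝ) ^ (j - g) * poch (u + g + i) (j - g) * poch x (n - j) *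
          (j.choose (j - g) : ℝ) * ((g + i).choose j : ℝ) *
          gbinom (x + u + n - 1) (n - j) := by
  simpa only [gbinom_eq_ringChoose, poch_eq_ascPochhammer_eval, ← Nat.cast_add,
    Ring.choose_natCast, Nat.choose_symm_add] using gbinom_identity_three_general x u i n g hg
end
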